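/- For Q, Q' ∈ Q_F(N, d_K): the classes [Q] and [Q'] are equal in C_F(N,d_K) (i.e., Q' = Q^γ for some γ ∈ Γ_{F,1}(N)) if and only if the fractional ideals [ω_Q,1]_F = O_F·ω_Q + O_F and [ω_{Q'},1]_F define the same class in the ray class group C(N·O_K) of K modulo N·O_K. -/

import Mathlib

open NumberField Complex

noncomputable section

def iota (F K : Type) [Field F] [Field K] [NumberField F] [Algebra F K]
    (u : 𝓞 F) : K := algebraMap F K (u : F)

def IsGammaN (F : Type) [Field F] [NumberField F] (τ : F →+* ℝ) (N : ℕ)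
    (γ : Matrix (Fin 2) (Fin 2) (𝓞 F)) : Prop :=
  IsUnit γ.det ∧ 0 < τ (γ.det : F) ∧
    (N : 𝓞 F) ∣ γ 1 0 ∧ ∃ ζ : (𝓞 F)ˣ, (N : 𝓞 F) ∣ (γ 1 1 - (ζ : 𝓞 F))

def FormAct (F : Type) [Field F] [NumberField F]
    (γ : Matrix (Fin 2) (Fin 2) (𝓞 F)) (a b c a' b' c' : 𝓞 F) : Prop :=
  γ.det * a' = a * γ 0 0 ^ 2 + b * γ 0 0 * γ 1 0 + c * γ 1 0 ^ 2 ∧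
  γ.det * b' = 2 * a * γ 0 0 * γ 0 1 + b * (γ 0 0 * γ 1 1 + γ 0 1 * γ 1 0)
      + 2 * c * γ 1 0 * γ 1 1 ∧
  γ.det * c' = a * γ 0 1 ^ 2 + b * γ 0 1 * γ 1 1 + c * γ 1 1 ^ 2

def IsFormN (F : Type) [Field F] [NumberField F] (τ : F →+* ℝ) (N : ℕ)
    (dK : 𝓞 F) (a b c : 𝓞 F) : Prop :=
  (∀ d : 𝓞 F, d ∣ a → d ∣ b → d ∣ c → IsUnit d) ∧
  0 < τ (a : F) ∧
  b ^ 2 - 4 * a * c = dK ∧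
  (∀ d : 𝓞 F, d ∣ a → d ∣ (N : 𝓞 F) → IsUnit d)

/-- `ω` is the root of `Q(x,1)` lying in the upper half-plane (via the fixed
embedding `σ : K → ℂ`). -/
def IsFormRoot (F K : Type) [Field F] [Field K] [NumberField F] [Algebra F K]
    (σ : K →+* ℂ) (a b c : 𝓞 F) (ω : K) : Prop :=
  iota F K a * ω ^ 2 + iota F K b * ω + iota F K c = 0 ∧ 0 < (σ ω).im

/-- Multiplicative congruence `ν ≡* 1 (mod N·O_K)`. -/
def MulCongOne (K : Type) [Field K] [NumberField K] (N : ℕ) (ν : K) : Prop :=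
  ∃ α β : 𝓞 K, (β : K) ≠ 0 ∧
    IsCoprime (Ideal.span {β}) (Ideal.span {(N : 𝓞 K)}) ∧
    ν = (α : K) / (β : K) ∧ (N : 𝓞 K) ∣ (α - β)

/-!
For a form `Q = (a, b, c)` of discriminant `d` with root `ω` in the upper half-plane, `2aω + b` is
the square root of `d` in the upper half-plane, whatever `Q` is. So `ω` determines `Q`,
`det γ • Q' = Q ∘ γ` means that `γ` carries `ω'` to `ω`, and `aω` is a translate of `ω₀`, the
generator of the order `S = [ω₀, 1]`. An equality of lattices `[ω, 1] = ν [ω', 1]` is the same as a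
matrix `γ` of unit determinant, with second row `(r, s)`, such that `γ` carries `ω'` to `ω` and
`ν⁻¹ = rω' + s`. Since `a'` is prime to `n`, `ν = a' / (r(a'ω') + a's)` is multiplicatively
congruent to `1` modulo `n` iff `n` divides `r(a'ω') + a'(s - 1)`, that is, iff `n ∣ r` and
`n ∣ s - 1`; the unit `ζ` allowed in the congruence group is removed by rescaling `γ`.
-/

/-- The binary quadratic form `a X² + b X Y + c Y²`, given by its coefficients. -/
@[ext]
structure BinaryForm (R : Type*) where
  a : R
  b : R
  c : R

namespace BinaryForm

variable {R K : Type*} [CommRing R] [Field K] [Algebra R K]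

/-- Multiplication of all coefficients of a form by a scalar. -/
instance : MulAction R (BinaryForm R) where
  smul d Q := ⟨d * Q.a, d * Q.b, d * Q.c⟩
  one_smul Q := by ext <;> exact one_mul _
  mul_smul d e Q := by ext <;> exact mul_assoc d e _

/-- The discriminant of a binary quadratic form. -/
def disc (Q : BinaryForm R) : R := Q.b ^ 2 - 4 * Q.a * Q.c

/-- The value `Q(x, y)`. -/
def eval (Q : BinaryForm R) (x y : R) : R := Q.a * x ^ 2 + Q.b * x * y + Q.c * y ^ 2

/-- The value `Q(z, 1)` at an element `z` of an extension field. -/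
def aeval (Q : BinaryForm R) (z : K) : K :=
  algebraMap R K Q.a * z ^ 2 + algebraMap R K Q.b * z + algebraMap R K Q.c

/-- The form `Q(γ (X, Y)ᵗ)`, without the normalizing factor `(det γ)⁻¹` of the action `Q ↦ Q^γ`;
thus `Q' = Q^γ` is expressed as `γ.det • Q' = Q.subst γ`. -/
def subst (Q : BinaryForm R) (γ : Matrix (Fin 2) (Fin 2) R) : BinaryForm R where
  a := Q.eval (γ 0 0) (γ 1 0)
  b := 2 * Q.a * γ 0 0 * γ 0 1 + Q.b * (γ 0 0 * γ 1 1 + γ 0 1 * γ 1 0)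
      + 2 * Q.c * γ 1 0 * γ 1 1
  c := Q.eval (γ 0 1) (γ 1 1)

/-- `z` is a root of `Q(X, 1)` in the upper half-plane, with respect to the embedding `σ`. -/
def IsUpperRoot (σ : K →+* ℂ) (Q : BinaryForm R) (z : K) : Prop :=
  Q.aeval z = 0 ∧ 0 < (σ z).im

lemma disc_smul (d : R) (Q : BinaryForm R) : (d • Q).disc = d ^ 2 * Q.disc := by
  change (d * Q.b) ^ 2 - 4 * (d * Q.a) * (d * Q.c) = d ^ 2 * (Q.b ^ 2 - 4 * Q.a * Q.c)
  ring

lemma disc_subst (Q : BinaryForm R) (γ : Matrix (Fin 2) (Fin 2) R) :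
    (Q.subst γ).disc = γ.det ^ 2 * Q.disc := by
  simp only [disc, subst, eval, Matrix.det_fin_two]
  ring

lemma subst_smul (Q : BinaryForm R) (u : R) (γ : Matrix (Fin 2) (Fin 2) R) :
    Q.subst (u • γ) = u ^ 2 • Q.subst γ := by
  change Q.subst (u • γ) = ⟨u ^ 2 * (Q.subst γ).a, u ^ 2 * (Q.subst γ).b, u ^ 2 * (Q.subst γ).c⟩
  ext <;> simp only [subst, eval, Matrix.smul_apply, smul_eq_mul] <;> ring

lemma aeval_monic (b c : R) (z : K) :
    aeval ⟨1, b, c⟩ z = z ^ 2 + algebraMap R K b * z + algebraMap R K c := by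
  simp only [aeval, map_one, one_mul]

lemma aeval_smul (d : R) (Q : BinaryForm R) (z : K) :
    (d • Q).aeval z = algebraMap R K d * Q.aeval z := by
  change algebraMap R K (d * Q.a) * z ^ 2 + algebraMap R K (d * Q.b) * z
    + algebraMap R K (d * Q.c) = _
  simp only [aeval, map_mul]
  ring

end BinaryForm

/-- The numerator `p z + q` of the Möbius transformation `z ↦ (p z + q) / (r z + s)`. -/
def moebiusNum {R K : Type*} [CommRing R] [Field K] [Algebra R K]
    (γ : Matrix (Fin 2) (Fin 2) R) (z : K) : K :=
  algebraMap R K (γ 0 0) * z + algebraMap R K (γ 0 1)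

/-- The denominator `r z + s` of the Möbius transformation `z ↦ (p z + q) / (r z + s)`. -/
def moebiusDenom {R K : Type*} [CommRing R] [Field K] [Algebra R K]
    (γ : Matrix (Fin 2) (Fin 2) R) (z : K) : K :=
  algebraMap R K (γ 1 0) * z + algebraMap R K (γ 1 1)

lemma BinaryForm.aeval_subst {R K : Type*} [CommRing R] [Field K] [Algebra R K]
    (Q : BinaryForm R) {γ : Matrix (Fin 2) (Fin 2) R} {w z : K}
    (h : w * moebiusDenom γ z = moebiusNum γ z) :
    (Q.subst γ).aeval z = moebiusDenom γ z ^ 2 * Q.aeval w := by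
  have homogenize : moebiusDenom γ z ^ 2 * Q.aeval w =
      algebraMap R K Q.a * moebiusNum γ z ^ 2
        + algebraMap R K Q.b * moebiusNum γ z * moebiusDenom γ z
        + algebraMap R K Q.c * moebiusDenom γ z ^ 2 := by
    rw [← h, aeval]
    ring
  rw [homogenize]
  simp only [aeval, subst, eval, moebiusNum, moebiusDenom, map_add, map_mul, map_pow, map_ofNat]
  ring

section UpperHalfPlane

variable {R K : Type*} [CommRing R] [Field K] [Algebra R K] {τ : R →+* ℝ} {σ : K →+* ℂ}

lemma linearIndependent_pair_one_of_im_pos [FaithfulSMul R K]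
    (hστ : ∀ x, σ (algebraMap R K x) = τ x) {z : K} (hz : 0 < (σ z).im) :
    LinearIndependent R ![z, 1] := by
  have eq_zero {u : R} (hu : τ u = 0) : u = 0 := by
    rw [← FaithfulSMul.algebraMap_eq_zero_iff R K, ← map_eq_zero σ, hστ, hu, ofReal_zero]
  refine LinearIndependent.pair_iff.mpr fun u v h ↦ ?_
  have hσ := congrArg σ h
  simp only [Algebra.smul_def, map_add, map_mul, mul_one, map_zero, hστ] at hσ
  have hu : τ u = 0 := by simpa [hz.ne'] using congrArg Complex.im hσ
  have hv : τ v = 0 := by simpa [hu] using congrArg Complex.re hσ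
  exact ⟨eq_zero hu, eq_zero hv⟩

lemma moebiusDenom_ne_zero [FaithfulSMul R K] (hστ : ∀ x, σ (algebraMap R K x) = τ x)
    {γ : Matrix (Fin 2) (Fin 2) R} (hγ : γ.det ≠ 0) {z : K} (hz : 0 < (σ z).im) :
    moebiusDenom γ z ≠ 0 := by
  intro h
  obtain ⟨hr, hs⟩ := (linearIndependent_pair_one_of_im_pos hστ hz).eq_zero_of_pair
    (s := γ 1 0) (t := γ 1 1) (by simpa [moebiusDenom, Algebra.smul_def] using h)
  exact hγ (by simp [Matrix.det_fin_two, hr, hs])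

lemma det_mul_im_eq (hστ : ∀ x, σ (algebraMap R K x) = τ x)
    {γ : Matrix (Fin 2) (Fin 2) R} {w z : K} (h : w * moebiusDenom γ z = moebiusNum γ z) :
    τ γ.det * (σ z).im = (σ w).im * normSq (σ (moebiusDenom γ z)) := by
  have hσ := congrArg σ h
  have him := congrArg Complex.im hσ
  have hre := congrArg Complex.re hσ
  simp only [moebiusDenom, moebiusNum, map_add, map_mul, hστ, add_re, add_im, mul_re, mul_im,
    ofReal_re, ofReal_im] at him hre
  simp only [moebiusDenom, map_add, map_mul, hστ, Matrix.det_fin_two, map_sub, normSq_apply,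
    add_re, add_im, mul_re, mul_im, ofReal_re, ofReal_im]
  linear_combination (-τ (γ 1 1) - τ (γ 1 0) * (σ z).re) * him + τ (γ 1 0) * (σ z).im * hre

lemma det_pos_iff_im_pos [FaithfulSMul R K] (hστ : ∀ x, σ (algebraMap R K x) = τ x)
    {γ : Matrix (Fin 2) (Fin 2) R} (hγ : γ.det ≠ 0) {w z : K} (hz : 0 < (σ z).im)
    (h : w * moebiusDenom γ z = moebiusNum γ z) : 0 < τ γ.det ↔ 0 < (σ w).im := by
  have hdenom : 0 < normSq (σ (moebiusDenom γ z)) :=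
    normSq_pos.mpr ((map_ne_zero σ).mpr (moebiusDenom_ne_zero hστ hγ hz))
  rw [← mul_pos_iff_of_pos_right hz, det_mul_im_eq hστ h, mul_pos_iff_of_pos_right hdenom]

namespace BinaryForm

variable {Q Q' : BinaryForm R} {z z' : K}

lemma IsUpperRoot.map_b (hστ : ∀ x, σ (algebraMap R K x) = τ x) (hz : Q.IsUpperRoot σ z) :
    τ Q.b = -2 * τ Q.a * (σ z).re := by
  have him := congrArg (fun x ↦ (σ x).im) hz.1
  simp only [aeval, pow_two, map_add, map_mul, hστ, add_im, mul_im, mul_re, ofReal_re, ofReal_im,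
    map_zero, zero_im] at him
  exact mul_right_cancel₀ hz.2.ne' (by linear_combination him)

lemma IsUpperRoot.map_c (hστ : ∀ x, σ (algebraMap R K x) = τ x) (hz : Q.IsUpperRoot σ z) :
    τ Q.c = τ Q.a * normSq (σ z) := by
  have hre := congrArg (fun x ↦ (σ x).re) hz.1
  simp only [aeval, pow_two, map_add, map_mul, hστ, add_re, mul_im, mul_re, ofReal_re, ofReal_im,
    map_zero, zero_re] at hre
  rw [normSq_apply]
  linear_combination hre - (σ z).re * hz.map_b hστ

lemma IsUpperRoot.map_disc (hστ : ∀ x, σ (algebraMap R K x) = τ x) (hz : Q.IsUpperRoot σ z) :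
    τ Q.disc = -(2 * τ Q.a * (σ z).im) ^ 2 := by
  simp only [disc, map_sub, map_mul, map_pow, map_ofNat, hz.map_b hστ, hz.map_c hστ, normSq_apply]
  ring

lemma IsUpperRoot.map_eval (hστ : ∀ x, σ (algebraMap R K x) = τ x) (hz : Q.IsUpperRoot σ z)
    (x y : R) : τ (Q.eval x y) = τ Q.a * normSq (σ (algebraMap R K x - algebraMap R K y * z)) := by
  simp only [eval, map_add, map_sub, map_mul, map_pow, hστ, hz.map_b hστ, hz.map_c hστ,
    normSq_apply, sub_re, sub_im, mul_re, mul_im, ofReal_re, ofReal_im]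
  ring

lemma IsUpperRoot.subst_a_pos [FaithfulSMul R K] (hστ : ∀ x, σ (algebraMap R K x) = τ x)
    (hz : Q.IsUpperRoot σ z) (ha : 0 < τ Q.a) {γ : Matrix (Fin 2) (Fin 2) R} (hγ : γ.det ≠ 0) :
    0 < τ (Q.subst γ).a := by
  change 0 < τ (Q.eval (γ 0 0) (γ 1 0))
  rw [hz.map_eval hστ]
  refine mul_pos ha (normSq_pos.mpr ((map_ne_zero σ).mpr fun h ↦ hγ ?_))
  obtain ⟨hr, hp⟩ := (linearIndependent_pair_one_of_im_pos hστ hz.2).eq_zero_of_pair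
    (s := -γ 1 0) (t := γ 0 0) (by
      simp only [Algebra.smul_def, map_neg, mul_one]
      linear_combination h)
  simp [Matrix.det_fin_two, neg_eq_zero.mp hr, hp]

/-- Both sides are the square root of the discriminant in the upper half-plane. -/
lemma IsUpperRoot.two_mul_add_eq (hστ : ∀ x, σ (algebraMap R K x) = τ x)
    (hz : Q.IsUpperRoot σ z) (hz' : Q'.IsUpperRoot σ z') (ha : 0 < τ Q.a) (ha' : 0 < τ Q'.a)
    (hdisc : Q.disc = Q'.disc) :
    2 * algebraMap R K Q.a * z + algebraMap R K Q.b =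
      2 * algebraMap R K Q'.a * z' + algebraMap R K Q'.b := by
  have him : 2 * τ Q.a * (σ z).im = 2 * τ Q'.a * (σ z').im := by
    have := hz.2
    have := hz'.2
    refine (sq_eq_sq₀ (by positivity) (by positivity)).mp (neg_injective ?_)
    rw [← hz.map_disc hστ, ← hz'.map_disc hστ, hdisc]
  apply σ.injective
  simp only [map_add, map_mul, map_ofNat, hστ, hz.map_b hστ, hz'.map_b hστ]
  apply Complex.ext
  · simp
  · simpa using him

lemma IsUpperRoot.unique (hστ : ∀ x, σ (algebraMap R K x) = τ x) (ha : 0 < τ Q.a)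
    (hz : Q.IsUpperRoot σ z) (hz' : Q.IsUpperRoot σ z') : z = z' := by
  have h2a : 2 * algebraMap R K Q.a ≠ 0 := by
    rw [← map_ne_zero σ, map_mul, map_ofNat, hστ]
    exact mul_ne_zero two_ne_zero (ofReal_ne_zero.mpr ha.ne')
  exact mul_left_cancel₀ h2a (add_right_cancel (hz.two_mul_add_eq hστ hz' ha ha rfl))

lemma eq_of_isUpperRoot [FaithfulSMul R K] (hστ : ∀ x, σ (algebraMap R K x) = τ x)
    (ha : 0 < τ Q.a) (ha' : 0 < τ Q'.a) (hdisc : Q.disc = Q'.disc)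
    (hz : Q.IsUpperRoot σ z) (hz' : Q'.IsUpperRoot σ z) : Q = Q' := by
  have hinj : Function.Injective (algebraMap R K) := FaithfulSMul.algebraMap_injective R K
  obtain ⟨h2a, hb⟩ := (linearIndependent_pair_one_of_im_pos hστ hz.2).eq_of_pair
    (s := 2 * Q.a) (s' := 2 * Q'.a) (t := Q.b) (t' := Q'.b) (by
      simpa only [Algebra.smul_def, map_mul, map_ofNat, mul_one] using
        hz.two_mul_add_eq hστ hz' ha ha' hdisc)
  have hτa : τ Q.a = τ Q'.a :=
    mul_left_cancel₀ two_ne_zero (by simpa only [map_mul, map_ofNat] using congrArg τ h2a)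
  have hKa : algebraMap R K Q.a = algebraMap R K Q'.a := σ.injective (by simp [hστ, hτa])
  have haeval : Q.aeval z = Q'.aeval z := hz.1.trans hz'.1.symm
  refine BinaryForm.ext (hinj hKa) hb (hinj ?_)
  simpa [aeval, hKa, hb] using haeval

theorem det_smul_eq_subst_iff [FaithfulSMul R K] (hστ : ∀ x, σ (algebraMap R K x) = τ x)
    (ha : 0 < τ Q.a) (ha' : 0 < τ Q'.a) (hdisc : Q.disc = Q'.disc)
    (hz : Q.IsUpperRoot σ z) (hz' : Q'.IsUpperRoot σ z')
    {γ : Matrix (Fin 2) (Fin 2) R} (hγ : 0 < τ γ.det) :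
    γ.det • Q' = Q.subst γ ↔ z * moebiusDenom γ z' = moebiusNum γ z' := by
  have hdet : γ.det ≠ 0 := fun h ↦ hγ.ne' (by rw [h, map_zero])
  have hdenom := moebiusDenom_ne_zero hστ hdet hz'.2
  have hroot' : (γ.det • Q').aeval z' = 0 := by rw [aeval_smul, hz'.1, mul_zero]
  constructor
  · intro h
    have hw := div_mul_cancel₀ (moebiusNum γ z') hdenom
    have hroot : Q.aeval (moebiusNum γ z' / moebiusDenom γ z') = 0 := by
      rw [h, aeval_subst Q hw] at hroot'
      exact (mul_eq_zero.mp hroot').resolve_left (pow_ne_zero 2 hdenom)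
    rwa [hz.unique hστ ha ⟨hroot, (det_pos_iff_im_pos hστ hdet hz'.2 hw).mp hγ⟩]
  · intro h
    have hroot : (Q.subst γ).aeval z' = 0 := by rw [aeval_subst Q h, hz.1, mul_zero]
    have ha'' : 0 < τ (γ.det • Q').a := (map_mul τ γ.det Q'.a).symm ▸ mul_pos hγ ha'
    refine eq_of_isUpperRoot hστ ha'' (hz.subst_a_pos hστ ha hdet) ?_
      ⟨hroot', hz'.2⟩ ⟨hroot, hz'.2⟩
    rw [disc_smul, disc_subst, hdisc]

end BinaryForm

end UpperHalfPlane

section CongruenceGroup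

variable {R : Type*} [CommRing R]

/-- Membership in `Γ₁(n)`: matrices of unit determinant, positive at the real place `τ`, whose
second row is congruent to `(0, ζ)` modulo `n` for some unit `ζ`. -/
def IsGammaOne (τ : R →+* ℝ) (n : R) (γ : Matrix (Fin 2) (Fin 2) R) : Prop :=
  IsUnit γ.det ∧ 0 < τ γ.det ∧ n ∣ γ 1 0 ∧ ∃ ζ : Rˣ, n ∣ γ 1 1 - ζ

lemma exists_isGammaOne_and_det_smul_eq_subst_iff {τ : R →+* ℝ} {n : R} {Q Q' : BinaryForm R} :
    (∃ γ, IsGammaOne τ n γ ∧ γ.det • Q' = Q.subst γ) ↔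
      ∃ γ : Matrix (Fin 2) (Fin 2) R, (IsUnit γ.det ∧ 0 < τ γ.det) ∧
        (n ∣ γ 1 0 ∧ n ∣ γ 1 1 - 1) ∧ γ.det • Q' = Q.subst γ := by
  constructor
  · rintro ⟨γ, ⟨hunit, hpos, hr, ζ, hs⟩, hact⟩
    set u : R := ↑ζ⁻¹
    have hu : IsUnit u := ζ⁻¹.isUnit
    have hdet : (u • γ).det = u ^ 2 * γ.det := by simp
    refine ⟨u • γ, ⟨?_, ?_⟩, ⟨hr.mul_left u, ?_⟩, ?_⟩
    · rw [hdet]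
      exact (hu.pow 2).mul hunit
    · rw [hdet, map_mul, map_pow]
      have : τ u ≠ 0 := (hu.map τ).ne_zero
      positivity
    · have : (u • γ) 1 1 - 1 = u * (γ 1 1 - ζ) := by simp [u, mul_sub]
      exact this ▸ hs.mul_left u
    · rw [hdet, mul_smul, hact, BinaryForm.subst_smul]
  · rintro ⟨γ, ⟨hunit, hpos⟩, ⟨hr, hs⟩, hact⟩
    exact ⟨γ, ⟨hunit, hpos, hr, 1, by simpa using hs⟩, hact⟩

end CongruenceGroup

section Lattices

variable {R M : Type*} [CommRing R] [AddCommGroup M] [Module R M]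

lemma span_pair_eq_span_pair_of_isUnit_det {x y z w : M} {γ : Matrix (Fin 2) (Fin 2) R}
    (hγ : IsUnit γ.det) (hx : x = γ 0 0 • z + γ 0 1 • w) (hy : y = γ 1 0 • z + γ 1 1 • w) :
    Submodule.span R {x, y} = Submodule.span R {z, w} := by
  apply le_antisymm <;> refine Submodule.span_le.mpr (Set.pair_subset ?_ ?_)
  · exact Submodule.mem_span_pair.mpr ⟨_, _, hx.symm⟩
  · exact Submodule.mem_span_pair.mpr ⟨_, _, hy.symm⟩
  · refine (Submodule.smul_mem_iff_of_isUnit _ hγ).mp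
      (Submodule.mem_span_pair.mpr ⟨γ 1 1, -γ 0 1, ?_⟩)
    rw [hx, hy, Matrix.det_fin_two]
    module
  · refine (Submodule.smul_mem_iff_of_isUnit _ hγ).mp
      (Submodule.mem_span_pair.mpr ⟨-γ 1 0, γ 0 0, ?_⟩)
    rw [hx, hy, Matrix.det_fin_two]
    module

theorem span_pair_eq_span_pair_iff {x y z w : M} (hxy : LinearIndependent R ![x, y]) :
    Submodule.span R {x, y} = Submodule.span R {z, w} ↔
      ∃ γ : Matrix (Fin 2) (Fin 2) R, IsUnit γ.det ∧
        x = γ 0 0 • z + γ 0 1 • w ∧ y = γ 1 0 • z + γ 1 1 • w := by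
  refine ⟨fun h ↦ ?_, fun ⟨γ, hγ, hx, hy⟩ ↦ span_pair_eq_span_pair_of_isUnit_det hγ hx hy⟩
  have mem_left (x y : M) : x ∈ Submodule.span R {x, y} := Submodule.subset_span (by simp)
  have mem_right (x y : M) : y ∈ Submodule.span R {x, y} := Submodule.subset_span (by simp)
  obtain ⟨p, q, hx⟩ := Submodule.mem_span_pair.mp (h.le (mem_left x y))
  obtain ⟨r, s, hy⟩ := Submodule.mem_span_pair.mp (h.le (mem_right x y))
  obtain ⟨p', q', hz⟩ := Submodule.mem_span_pair.mp (h.ge (mem_left z w))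
  obtain ⟨r', s', hw⟩ := Submodule.mem_span_pair.mp (h.ge (mem_right z w))
  obtain ⟨h00, h01⟩ := hxy.eq_of_pair (s := p * p' + q * r') (t := p * q' + q * s')
    (s' := 1) (t' := 0) (by linear_combination (norm := module) hx + p • hz + q • hw)
  obtain ⟨h10, h11⟩ := hxy.eq_of_pair (s := r * p' + s * r') (t := r * q' + s * s')
    (s' := 0) (t' := 1) (by linear_combination (norm := module) hy + r • hz + s • hw)
  have hinv : !![p, q; r, s] * !![p', q'; r', s'] = 1 := by
    rw [Matrix.mul_fin_two, h00, h01, h10, h11, Matrix.one_fin_two]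
  exact ⟨!![p, q; r, s], Matrix.isUnit_det_of_right_inverse hinv, hx.symm, hy.symm⟩

lemma span_pair_one_eq_span_pair_mul_iff {K : Type*} [Field K] [Algebra R K] {w z ν : K}
    (hw : LinearIndependent R ![w, 1]) :
    Submodule.span R {w, 1} = Submodule.span R {ν * z, ν} ↔
      ∃ γ : Matrix (Fin 2) (Fin 2) R, IsUnit γ.det ∧
        w * moebiusDenom γ z = moebiusNum γ z ∧ ν * moebiusDenom γ z = 1 := by
  rw [span_pair_eq_span_pair_iff hw]
  refine exists_congr fun γ ↦ and_congr_right fun _ ↦ ?_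
  have hnum : γ 0 0 • (ν * z) + γ 0 1 • ν = ν * moebiusNum γ z := by
    simp only [Algebra.smul_def, moebiusNum]
    ring
  have hdenom : γ 1 0 • (ν * z) + γ 1 1 • ν = ν * moebiusDenom γ z := by
    simp only [Algebra.smul_def, moebiusDenom]
    ring
  rw [hnum, hdenom]
  constructor
  · rintro ⟨h0, h1⟩
    exact ⟨by linear_combination moebiusDenom γ z * h0 - moebiusNum γ z * h1, h1.symm⟩
  · rintro ⟨h0, h1⟩
    exact ⟨by linear_combination ν * h0 - w * h1, h1.symm⟩

end Lattices

section QuadraticOrder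

variable {R S K : Type*} [CommRing R] [CommRing S] [Field K] [Algebra R S] [Algebra S K]

/-- The multiplicative congruence `ν ≡* 1 (mod n)` for an element `ν` of a field containing the
ring `S`: `ν` is a quotient of elements of `S` congruent modulo `n` and prime to `n`. -/
def MulCongOneMod (n : S) (ν : K) : Prop :=
  ∃ α β : S, algebraMap S K β ≠ 0 ∧ IsCoprime β n ∧
    ν = algebraMap S K α / algebraMap S K β ∧ n ∣ α - β

lemma mulCongOneMod_div_iff [FaithfulSMul S K] {n α β : S} (hα : IsCoprime α n)
    (hβ : algebraMap S K β ≠ 0) :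
    MulCongOneMod n (algebraMap S K α / algebraMap S K β) ↔ n ∣ α - β := by
  constructor
  · rintro ⟨α', β', hβ', hcop, hdiv, hdvd⟩
    have hcross : α * β' = α' * β := by
      apply FaithfulSMul.algebraMap_injective S K
      simpa only [map_mul] using (div_eq_div_iff hβ hβ').mp hdiv
    refine hcop.symm.dvd_of_dvd_mul_right ?_
    have : (α - β) * β' = β * (α' - β') := by linear_combination hcross
    exact this ▸ hdvd.mul_left β
  · intro h
    obtain ⟨k, hk⟩ := id h
    have hβn : IsCoprime β n := by
      have : β = α + n * -k := by linear_combination -hk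
      exact this ▸ hα.add_mul_left_left (-k)
    exact ⟨α, β, hβ, hβn, rfl, h⟩

lemma linearIndependent_pair_one_of_algebraMap {A : Type*} [CommRing A] [Algebra S A]
    [Algebra R A] [IsScalarTower R S A] {θ : S} (h : LinearIndependent R ![algebraMap S A θ, 1]) :
    LinearIndependent R ![θ, 1] := by
  refine .of_comp (IsScalarTower.toAlgHom R S A).toLinearMap ?_
  convert h using 1
  ext i
  fin_cases i <;> simp

lemma dvd_mul_add_iff_of_span_eq_top {θ : S} (hθ : LinearIndependent R ![θ, 1])
    (hS : Submodule.span R {θ, 1} = ⊤) {n u v : R} :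
    algebraMap R S n ∣ algebraMap R S u * θ + algebraMap R S v ↔ n ∣ u ∧ n ∣ v := by
  constructor
  · rintro ⟨m, hm⟩
    obtain ⟨u', v', rfl⟩ := Submodule.mem_span_pair.mp (hS ▸ Submodule.mem_top : m ∈ _)
    obtain ⟨hu, hv⟩ := hθ.eq_of_pair (s := u) (t := v) (s' := n * u') (t' := n * v') (by
      simp only [Algebra.smul_def, map_mul, mul_one] at hm ⊢
      linear_combination hm)
    exact ⟨⟨u', hu⟩, ⟨v', hv⟩⟩
  · rintro ⟨hu, hv⟩
    exact ((map_dvd _ hu).mul_right θ).add (map_dvd _ hv)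

variable [Algebra R K] [IsScalarTower R S K]

theorem mulCongOneMod_inv_moebiusDenom_iff [FaithfulSMul S K] {θ : S}
    (hθ : LinearIndependent R ![θ, 1]) (hS : Submodule.span R {θ, 1} = ⊤)
    {a n : R} (ha : algebraMap R K a ≠ 0) (han : IsCoprime a n)
    {z : K} (hz : algebraMap S K θ = algebraMap R K a * z)
    {γ : Matrix (Fin 2) (Fin 2) R} (hγ : moebiusDenom γ z ≠ 0) :
    MulCongOneMod (algebraMap R S n) (moebiusDenom γ z)⁻¹ ↔ n ∣ γ 1 0 ∧ n ∣ γ 1 1 - 1 := by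
  set β : S := algebraMap R S (γ 1 0) * θ + algebraMap R S (a * γ 1 1)
  have hβ : algebraMap S K β = algebraMap R K a * moebiusDenom γ z := by
    simp only [β, moebiusDenom, map_add, map_mul, hz, ← IsScalarTower.algebraMap_apply]
    ring
  have hfrac : (moebiusDenom γ z)⁻¹ = algebraMap S K (algebraMap R S a) / algebraMap S K β := by
    rw [hβ, ← IsScalarTower.algebraMap_apply, div_mul_cancel_left₀ ha]
  have hsub : β - algebraMap R S a =
      algebraMap R S (γ 1 0) * θ + algebraMap R S (a * (γ 1 1 - 1)) := by
    simp only [β, map_mul, map_sub, map_one]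
    ring
  rw [hfrac, mulCongOneMod_div_iff (han.map (algebraMap R S)) (hβ ▸ mul_ne_zero ha hγ),
    dvd_sub_comm, hsub, dvd_mul_add_iff_of_span_eq_top hθ hS]
  exact and_congr_right' ⟨han.symm.dvd_of_dvd_mul_left, fun h ↦ h.mul_left a⟩

end QuadraticOrder

lemma two_dvd_sub_of_four_dvd_sq_sub_sq {R : Type*} [CommRing R] [IsDomain R]
    [IsIntegrallyClosed R] {x y : R} (h : 4 ∣ x ^ 2 - y ^ 2) : 2 ∣ x - y := by
  obtain ⟨k, hk⟩ := h
  by_cases h2 : (2 : R) = 0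
  · have : (x - y) ^ 2 = 0 := by linear_combination hk + (2 * k + y ^ 2 - x * y) * h2
    exact (pow_eq_zero_iff two_ne_zero).mp this ▸ dvd_zero 2
  let L := FractionRing R
  have h2L : (2 : L) ≠ 0 := by
    simpa only [map_ofNat] using (FaithfulSMul.algebraMap_eq_zero_iff R L).not.mpr h2
  set e : L := algebraMap R L (x - y) / 2
  have he : 2 * e = algebraMap R L (x - y) := mul_div_cancel₀ _ h2L
  have heval : Polynomial.aeval e (Polynomial.X * (Polynomial.X + Polynomial.C y)) =
      algebraMap R L k := by
    have hkL := congrArg (algebraMap R L) hk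
    have h4L : (2 : L) * 2 ≠ 0 := mul_ne_zero h2L h2L
    simp only [map_sub, map_mul, map_pow, map_ofNat, map_add, Polynomial.aeval_X,
      Polynomial.aeval_C] at he hkL ⊢
    apply mul_left_cancel₀ h4L
    linear_combination hkL + (2 * e + algebraMap R L x + algebraMap R L y) * he
  have hint : IsIntegral R e :=
    .of_aeval_monic (Polynomial.monic_X.mul (Polynomial.monic_X_add_C y))
      (by simp [Polynomial.natDegree_X_mul, Polynomial.X_add_C_ne_zero])
      (heval ▸ isIntegral_algebraMap)
  obtain ⟨v, hv⟩ := IsIntegrallyClosed.isIntegral_iff.mp hint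
  refine ⟨v, FaithfulSMul.algebraMap_injective R L ?_⟩
  rw [map_mul, hv, map_ofNat, he]

namespace BinaryForm

lemma IsUpperRoot.exists_mul_eq_add {R K : Type*} [CommRing R] [IsIntegrallyClosed R] [Field K]
    [Algebra R K] [FaithfulSMul R K] {τ : R →+* ℝ} {σ : K →+* ℂ}
    (hστ : ∀ x, σ (algebraMap R K x) = τ x) {Q : BinaryForm R} {z : K} (hz : Q.IsUpperRoot σ z)
    {b₀ c₀ : R} {ω₀ : K} (hω₀ : IsUpperRoot σ ⟨1, b₀, c₀⟩ ω₀) (ha : 0 < τ Q.a)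
    (hdisc : Q.disc = disc ⟨1, b₀, c₀⟩) :
    ∃ v : R, algebraMap R K Q.a * z = ω₀ + algebraMap R K v := by
  have : IsDomain R := (FaithfulSMul.algebraMap_injective R K).isDomain
  obtain ⟨v, hv⟩ : 2 ∣ b₀ - Q.b := by
    refine two_dvd_sub_of_four_dvd_sq_sub_sq ⟨c₀ - Q.a * Q.c, ?_⟩
    simp only [disc] at hdisc
    linear_combination -hdisc
  refine ⟨v, ?_⟩
  have hsqrt := hz.two_mul_add_eq hστ hω₀ ha (by simp) hdisc
  have hvK := congrArg (algebraMap R K) hv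
  have h2 : (2 : K) ≠ 0 := by rw [← map_ne_zero σ, map_ofNat]; exact two_ne_zero
  apply mul_left_cancel₀ h2
  simp only [map_sub, map_mul, map_ofNat, map_one] at hsqrt hvK
  linear_combination hsqrt + hvK

end BinaryForm

lemma span_add_algebraMap_one {R S : Type*} [CommRing R] [CommRing S] [Algebra R S] (x : S)
    (v : R) : Submodule.span R {x + algebraMap R S v, 1} = Submodule.span R {x, 1} :=
  span_pair_eq_span_pair_of_isUnit_det (γ := !![1, v; 0, 1]) (by simp)
    (by simp [Algebra.smul_def]) (by simp)

theorem stmt9_general {R S K : Type*} [CommRing R] [IsIntegrallyClosed R] [CommRing S] [Field K]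
    [Algebra R S] [Algebra S K] [Algebra R K] [IsScalarTower R S K] [FaithfulSMul R K]
    [FaithfulSMul S K] {τ : R →+* ℝ} {σ : K →+* ℂ} (hστ : ∀ x, σ (algebraMap R K x) = τ x)
    {b₀ c₀ : R} {ω₀ : S} (hS : Submodule.span R {ω₀, 1} = ⊤)
    (hω₀ : BinaryForm.IsUpperRoot σ ⟨1, b₀, c₀⟩ (algebraMap S K ω₀)) {n : R} {Q Q' : BinaryForm R}
    (ha : 0 < τ Q.a) (ha' : 0 < τ Q'.a) (ha'n : IsCoprime Q'.a n)
    (hdisc : Q.disc = BinaryForm.disc ⟨1, b₀, c₀⟩) (hdisc' : Q'.disc = BinaryForm.disc ⟨1, b₀, c₀⟩)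
    {ω ω' : K} (hω : Q.IsUpperRoot σ ω) (hω' : Q'.IsUpperRoot σ ω') :
    (∃ γ, IsGammaOne τ n γ ∧ γ.det • Q' = Q.subst γ) ↔
      ∃ ν : K, ν ≠ 0 ∧ MulCongOneMod (algebraMap R S n) ν ∧
        Submodule.span R {ω, 1} = Submodule.span R {ν * ω', ν} := by
  have : IsDomain R := (FaithfulSMul.algebraMap_injective R K).isDomain
  obtain ⟨v, hv⟩ := hω'.exists_mul_eq_add hστ hω₀ ha' hdisc'
  have hωv : algebraMap S K (ω₀ + algebraMap R S v) = algebraMap R K Q'.a * ω' := by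
    rw [map_add, ← IsScalarTower.algebraMap_apply, hv]
  have hLI : LinearIndependent R ![ω₀ + algebraMap R S v, 1] :=
    linearIndependent_pair_one_of_algebraMap (A := K)
      (linearIndependent_pair_one_of_im_pos hστ (by simpa [hωv, hστ] using mul_pos ha' hω'.2))
  have ha'₀ : algebraMap R K Q'.a ≠ 0 := by
    rw [← map_ne_zero σ, hστ]
    exact ofReal_ne_zero.mpr ha'.ne'
  have hcong {γ : Matrix (Fin 2) (Fin 2) R} (hγ : moebiusDenom γ ω' ≠ 0) :
      MulCongOneMod (algebraMap R S n) (moebiusDenom γ ω')⁻¹ ↔ n ∣ γ 1 0 ∧ n ∣ γ 1 1 - 1 :=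
    mulCongOneMod_inv_moebiusDenom_iff hLI ((span_add_algebraMap_one ω₀ v).trans hS) ha'₀ ha'n
      hωv hγ
  have hmoebius {γ : Matrix (Fin 2) (Fin 2) R} (hγ : 0 < τ γ.det) :
      γ.det • Q' = Q.subst γ ↔ ω * moebiusDenom γ ω' = moebiusNum γ ω' :=
    BinaryForm.det_smul_eq_subst_iff hστ ha ha' (hdisc.trans hdisc'.symm) hω hω' hγ
  rw [exists_isGammaOne_and_det_smul_eq_subst_iff]
  simp only [span_pair_one_eq_span_pair_mul_iff (linearIndependent_pair_one_of_im_pos hστ hω.2)]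
  constructor
  · rintro ⟨γ, ⟨hunit, hpos⟩, hrow, hact⟩
    have hγ := moebiusDenom_ne_zero hστ hunit.ne_zero hω'.2
    exact ⟨_, inv_ne_zero hγ, (hcong hγ).mpr hrow, γ, hunit, (hmoebius hpos).mp hact,
      inv_mul_cancel₀ hγ⟩
  · rintro ⟨ν, -, hν, γ, hunit, hact, hdenom⟩
    have hpos := (det_pos_iff_im_pos hστ hunit.ne_zero hω'.2 hact).mpr hω.2
    obtain rfl := eq_inv_of_mul_eq_one_left hdenom
    exact ⟨γ, ⟨hunit, hpos⟩, (hcong (right_ne_zero_of_mul_eq_one hdenom)).mp hν,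
      (hmoebius hpos).mpr hact⟩

section RingOfIntegers

variable {F K : Type} [Field F] [Field K] [NumberField F] [Algebra F K]

lemma isGammaN_iff {τ : F →+* ℝ} {N : ℕ} {γ : Matrix (Fin 2) (Fin 2) (𝓞 F)} :
    IsGammaN F τ N γ ↔ IsGammaOne (τ.comp (algebraMap (𝓞 F) F)) N γ :=
  Iff.rfl

lemma formAct_iff {γ : Matrix (Fin 2) (Fin 2) (𝓞 F)} {a b c a' b' c' : 𝓞 F} :
    FormAct F γ a b c a' b' c' ↔
      γ.det • (⟨a', b', c'⟩ : BinaryForm (𝓞 F)) = BinaryForm.subst ⟨a, b, c⟩ γ := by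
  rw [BinaryForm.ext_iff]
  rfl

lemma mulCongOne_iff {F K : Type} [Field F] [Field K] [NumberField K] [Algebra F K]
    {N : ℕ} {ν : K} :
    MulCongOne K N ν ↔ MulCongOneMod (algebraMap (𝓞 F) (𝓞 K) N) ν := by
  simp only [MulCongOne, MulCongOneMod, Ideal.isCoprime_span_singleton_iff, map_natCast]

lemma mem_span_pair_iff_exists_iota {x y z : K} :
    x ∈ Submodule.span (𝓞 F) {y, z} ↔ ∃ u v : 𝓞 F, x = iota F K u * y + iota F K v * z := by
  simp only [Submodule.mem_span_pair, eq_comm (b := x), Algebra.smul_def]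
  rfl

lemma forall_exists_iota_iff {ω ω' ν : K} :
    (∀ x : K, (∃ u v : 𝓞 F, x = iota F K u * ω + iota F K v) ↔
        ∃ u v : 𝓞 F, x = ν * (iota F K u * ω' + iota F K v)) ↔
      Submodule.span (𝓞 F) {ω, 1} = Submodule.span (𝓞 F) {ν * ω', ν} := by
  have distrib (u v : 𝓞 F) : ν * (iota F K u * ω' + iota F K v) =
      iota F K u * (ν * ω') + iota F K v * ν := by ring
  simp only [SetLike.ext_iff, mem_span_pair_iff_exists_iota, mul_one, distrib]

lemma span_pair_one_eq_top {ω : 𝓞 K}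
    (h : ∀ x : 𝓞 K, ∃ u v : 𝓞 F, (x : K) = iota F K u * ω + iota F K v) :
    Submodule.span (𝓞 F) {ω, 1} = ⊤ := by
  refine eq_top_iff.mpr fun x _ ↦ Submodule.mem_span_pair.mpr ?_
  obtain ⟨u, v, hx⟩ := h x
  refine ⟨u, v, RingOfIntegers.ext ?_⟩
  simp only [Algebra.smul_def, mul_one, map_add, map_mul, hx]
  rfl

lemma IsFormN.isCoprime_natCast (hF : classNumber F = 1) {τ : F →+* ℝ} {N : ℕ} {d a b c : 𝓞 F}
    (h : IsFormN F τ N d a b c) : IsCoprime a (N : 𝓞 F) :=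
  have : IsPrincipalIdealRing (𝓞 F) := classNumber_eq_one_iff.mp hF
  IsRelPrime.isCoprime fun d hda hdN ↦ h.2.2.2 d hda hdN

lemma IsFormN.disc_eq {τ : F →+* ℝ} {N : ℕ} {b₀ c₀ a b c : 𝓞 F}
    (h : IsFormN F τ N (b₀ ^ 2 - 4 * c₀) a b c) :
    BinaryForm.disc ⟨a, b, c⟩ = BinaryForm.disc ⟨1, b₀, c₀⟩ := by
  simpa only [BinaryForm.disc, mul_one] using h.2.2.1

end RingOfIntegers

theorem stmt9 (F K : Type) [Field F] [Field K] [NumberField F] [NumberField K]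
    [Algebra F K] (τ : F →+* ℝ) (σ : K →+* ℂ)
    (hcompat : ∀ x : F, σ (algebraMap F K x) = (τ x : ℂ))
    (hF_totallyReal : ∀ φ : F →+* ℂ, ∀ x : F, (φ x).im = 0)
    (hquadratic : Module.finrank F K = 2)
    (hclass : NumberField.classNumber F = 1)
    (ωK : K) (hωKint : IsIntegral ℤ ωK) (hωKim : 0 < (σ ωK).im)
    (hgen : ∀ x : 𝓞 K, ∃ u v : 𝓞 F, (x : K) = iota F K u * ωK + iota F K v)
    (bK cK : 𝓞 F) (hmin : ωK ^ 2 + iota F K bK * ωK + iota F K cK = 0)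
    (dK : 𝓞 F) (hdK : dK = bK ^ 2 - 4 * cK)
    (N : ℕ) (hN : 0 < N)
    (a b c : 𝓞 F) (hQ : IsFormN F τ N dK a b c)
    (a' b' c' : 𝓞 F) (hQ' : IsFormN F τ N dK a' b' c')
    (ω : K) (hω : IsFormRoot F K σ a b c ω)
    (ω' : K) (hω' : IsFormRoot F K σ a' b' c' ω') :
    (∃ γ : Matrix (Fin 2) (Fin 2) (𝓞 F),
        IsGammaN F τ N γ ∧ FormAct F γ a b c a' b' c')
    ↔ (∃ ν : K, ν ≠ 0 ∧ MulCongOne K N ν ∧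
        ∀ x : K, (∃ u v : 𝓞 F, x = iota F K u * ω + iota F K v) ↔
          (∃ u v : 𝓞 F, x = ν * (iota F K u * ω' + iota F K v))) := by
  subst hdK
  simpa only [isGammaN_iff, formAct_iff, mulCongOne_iff (F := F), forall_exists_iota_iff] using
    stmt9_general (τ := τ.comp (algebraMap (𝓞 F) F)) (fun x ↦ hcompat x)
      (span_pair_one_eq_top (ω := ⟨ωK, hωKint⟩) hgen)
      ⟨(BinaryForm.aeval_monic _ _ _).trans hmin, hωKim⟩ hQ.2.1 hQ'.2.1
      (hQ'.isCoprime_natCast hclass) hQ.disc_eq hQ'.disc_eq hω hω'
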